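/- arXiv:math/0009012 — 2 statements merged into one kernel-verified Lean document; each statement's English description precedes it below -/
import Mathlib

section
/- Let λ > μ > 0 and x_0 ∈ ℝ. Then the total interaction between the two families of backward-scheme fundamental solutions with speeds λ and μ (the latter shifted by x_0) is given explicitly by: ∑_{n=1}^∞ ∫_ℝ G_{n,λ}(x) · G_{n,μ}(x − x_0) dx = 1/(λ − μ) if x_0 ≥ 0, and = (1/(λ − μ)) · exp( ((λ − μ)/(λμ)) · x_0 ) if x_0 < 0. -/
open MeasureTheory Real

/-- Gamma density `G_{n,λ}`: fundamental solution at step `n` of the backward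
semigroup scheme `v_n - v_{n-1} + λ ∂ₓ v_n = 0` with initial datum a Dirac delta. -/
noncomputable def gammaDensity (n : ℕ) (lam : ℝ) (x : ℝ) : ℝ :=
  if 0 ≤ x then x ^ (n - 1) * Real.exp (-x / lam) / (lam ^ n * (Nat.factorial (n - 1))) else 0

/-- summability of the binomial series -/
lemma tig_summable (t : ℝ) (h0 : 0 < t) (h1 : t < 1 / 2) (k : ℕ) :
    (∀ m : ℕ, ((2 * m + k).choose m : ℝ) * (t * (1 - t)) ^ m ≤ 2 ^ k * (4 * (t * (1 - t))) ^ m) ∧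
    Summable (fun m : ℕ => ((2 * m + k).choose m : ℝ) * (t * (1 - t)) ^ m) ∧
    (∑' m : ℕ, ((2 * m + k).choose m : ℝ) * (t * (1 - t)) ^ m) ≤
      2 ^ k * (1 - 4 * (t * (1 - t)))⁻¹ := by
  have hz : 0 < t * (1 - t) := mul_pos h0 (by linarith)
  have hz4 : 4 * (t * (1 - t)) < 1 := by nlinarith [mul_pos (sub_pos.2 h1) (sub_pos.2 h1)]
  have hb : ∀ m : ℕ, ((2 * m + k).choose m : ℝ) * (t * (1 - t)) ^ m ≤
      2 ^ k * (4 * (t * (1 - t))) ^ m := by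
    intro m
    have h : ((2 * m + k).choose m : ℝ) ≤ 2 ^ (2 * m + k) := by
      exact_mod_cast Nat.choose_le_two_pow _ _
    calc _ ≤ (2 : ℝ) ^ (2 * m + k) * (t * (1 - t)) ^ m := by gcongr
      _ = _ := by
        rw [pow_add, pow_mul, mul_pow 4]; norm_num; ring
  have hg := (hasSum_geometric_of_lt_one (by positivity) hz4).mul_left ((2 : ℝ) ^ k)
  have hs : Summable (fun m : ℕ => ((2 * m + k).choose m : ℝ) * (t * (1 - t)) ^ m) :=
    Summable.of_nonneg_of_le (fun m => by positivity) hb hg.summable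
  refine ⟨hb, hs, ?_⟩
  rw [← hg.tsum_eq]
  exact hs.tsum_le_tsum hb hg.summable

lemma tig_binom (t : ℝ) (h0 : 0 < t) (h1 : t < 1 / 2) (k : ℕ) :
    HasSum (fun m : ℕ => ((2 * m + k).choose m : ℝ) * (t * (1 - t)) ^ m)
      ((1 - 2 * t)⁻¹ * ((1 - t)⁻¹) ^ k) := by
  have h1t : 0 < 1 - t := by linarith
  have h2t : 0 < 1 - 2 * t := by linarith
  have hz : 0 < t * (1 - t) := mul_pos h0 h1t
  have hz4 : 4 * (t * (1 - t)) < 1 := by nlinarith [mul_pos (sub_pos.2 h1) (sub_pos.2 h1)]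
  set S : ℕ → ℝ := fun k => ∑' m : ℕ, ((2 * m + k).choose m : ℝ) * (t * (1 - t)) ^ m with hS
  have hsum := fun k => (tig_summable t h0 h1 k).2.1
  have hle : ∀ k, S k ≤ 2 ^ k * (1 - 4 * (t * (1 - t)))⁻¹ := fun k => (tig_summable t h0 h1 k).2.2
  have hnn : ∀ k, 0 ≤ S k := fun k => tsum_nonneg (fun m => by positivity)
  have rec0 : S 0 = 1 + 2 * (t * (1 - t)) * S 1 := by
    simp only [hS]
    rw [(hsum 0).tsum_eq_zero_add, ← tsum_mul_left]
    congr 1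
    · simp
    · congr 1; ext m
      have : (2 * (m + 1) + 0).choose (m + 1) = 2 * (2 * m + 1).choose m := by
        have e := Nat.choose_succ_succ (2 * m + 1) m
        have e2 := Nat.choose_symm_half m
        have e3 : 2 * (m + 1) + 0 = (2 * m + 1).succ := by omega
        rw [e3]; simp only [Nat.succ_eq_add_one] at *; omega
      rw [this]; push_cast; ring
  have recS : ∀ k, S (k + 1) = S k + t * (1 - t) * S (k + 2) := by
    intro k
    simp only [hS]
    rw [(hsum (k + 1)).tsum_eq_zero_add, (hsum k).tsum_eq_zero_add, ← tsum_mul_left, add_assoc,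
      ← Summable.tsum_add ((summable_nat_add_iff 1).2 (hsum k)) ((hsum (k + 2)).mul_left _)]
    congr 1
    · simp
    · congr 1; ext m
      have : (2 * (m + 1) + (k + 1)).choose (m + 1) =
          (2 * (m + 1) + k).choose (m + 1) + (2 * m + (k + 2)).choose m := by
        have e := Nat.choose_succ_succ (2 * m + (k + 2)) m
        have e3 : 2 * (m + 1) + (k + 1) = (2 * m + (k + 2)).succ := by omega
        have e4 : 2 * (m + 1) + k = 2 * m + (k + 2) := by omega
        rw [e3, e4]; simp only [Nat.succ_eq_add_one] at *; omega
      rw [this]; push_cast; ring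
  have hD : ∀ k, (S (k + 1) * (1 - t) - S k) * t ^ k = S 1 * (1 - t) - S 0 := by
    intro k
    induction k with
    | zero => simp
    | succ k ih =>
      rw [← ih, pow_succ]
      have := recS k
      linear_combination (-t ^ k) * this
  have hlim : Filter.Tendsto (fun k : ℕ => (4 * (1 - 4 * (t * (1 - t)))⁻¹) * (2 * t) ^ k)
      Filter.atTop (nhds 0) := by
    simpa using (tendsto_pow_atTop_nhds_zero_of_lt_one (by positivity)
      (by linarith : 2 * t < 1)).const_mul (4 * (1 - 4 * (t * (1 - t)))⁻¹)
  have hD0 : S 1 * (1 - t) - S 0 = 0 := by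
    have hb : ∀ k : ℕ, |S 1 * (1 - t) - S 0| ≤
        (4 * (1 - 4 * (t * (1 - t)))⁻¹) * (2 * t) ^ k := by
      intro k
      rw [← hD k, abs_mul, abs_of_pos (pow_pos h0 k), mul_pow, ← mul_assoc]
      gcongr
      have hA := hle k
      have hB := hle (k + 1)
      have hC := hnn k
      have hE := hnn (k + 1)
      rw [pow_succ] at hB
      rw [abs_le]
      constructor <;> nlinarith
    have := ge_of_tendsto' hlim hb
    exact abs_nonpos_iff.1 this
  have hS0 : S 0 = (1 - 2 * t)⁻¹ := by
    field_simp
    linear_combination rec0 + 2 * t * hD0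
  have hSk : ∀ k, S k = (1 - 2 * t)⁻¹ * ((1 - t)⁻¹) ^ k := by
    intro k
    induction k with
    | zero => simpa using hS0
    | succ k ih =>
      have h := hD k
      rw [hD0] at h
      have h' : S (k + 1) * (1 - t) = S k := by
        rcases mul_eq_zero.1 h with h | h
        · linarith
        · exact absurd h (by positivity)
      rw [pow_succ, ← mul_assoc, ← ih, ← h']
      field_simp
  rw [← hSk k]
  exact (hsum k).hasSum

lemma tig_int (s : ℝ) (hs : 0 < s) (N : ℕ) :
    IntegrableOn (fun y : ℝ => y ^ N * exp (-(s * y))) (Set.Ioi 0) ∧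
    ∫ y in Set.Ioi (0 : ℝ), y ^ N * exp (-(s * y)) = N.factorial / s ^ (N + 1) := by
  have h : ∫ y in Set.Ioi (0 : ℝ), y ^ N * exp (-(s * y)) = N.factorial / s ^ (N + 1) := by
    have := Real.integral_rpow_mul_exp_neg_mul_Ioi (a := (N : ℝ) + 1) (by positivity) hs
    simp only [add_sub_cancel_right, Real.rpow_natCast] at this
    rw [this, Real.Gamma_nat_eq_factorial]
    have e : ((N : ℝ) + 1) = ((N + 1 : ℕ) : ℝ) := by push_cast; rfl
    rw [e, Real.rpow_natCast]
    simp; field_simp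
  refine ⟨?_, h⟩
  apply Integrable.of_integral_ne_zero
  rw [h]; positivity

/-- the double series -/
noncomputable def tigT (a p q : ℝ) (x : ℕ × ℕ) : ℝ :=
  a ^ x.1 / (x.1.factorial) * (p * q) ^ (x.1 + x.2 + 1) *
    ((2 * x.2 + x.1).factorial / ((x.2 + x.1).factorial * x.2.factorial)) /
      (p + q) ^ (2 * x.2 + x.1 + 1)

lemma tig_intn (a p q : ℝ) (hp : 0 < p) (hq : 0 < q) (n : ℕ) :
    ∫ y in Set.Ioi (0 : ℝ), (p * q) ^ (n + 1) / (n.factorial : ℝ) ^ 2 *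
      (y ^ n * (a + y) ^ n * exp (-((p + q) * y))) =
    ∑ x ∈ Finset.HasAntidiagonal.antidiagonal n, tigT a p q x := by
  have hs : 0 < p + q := by positivity
  have e : ∀ y : ℝ, (p * q) ^ (n + 1) / (n.factorial : ℝ) ^ 2 *
      (y ^ n * (a + y) ^ n * exp (-((p + q) * y))) =
      ∑ x ∈ Finset.HasAntidiagonal.antidiagonal n, ((p * q) ^ (n + 1) / (n.factorial : ℝ) ^ 2 *
        (n.choose x.1) * a ^ x.1) * (y ^ (n + x.2) * exp (-((p + q) * y))) := by
    intro y
    rw [(Commute.all a y).add_pow', Finset.mul_sum, Finset.sum_mul, Finset.mul_sum]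
    refine Finset.sum_congr rfl fun x _ => ?_
    rw [nsmul_eq_mul, pow_add]; ring
  simp_rw [e]
  rw [integral_finsetSum _ (fun x _ => ((tig_int _ hs _).1.const_mul _))]
  refine Finset.sum_congr rfl fun x hx => ?_
  rw [integral_const_mul, (tig_int _ hs _).2]
  obtain ⟨k, m⟩ := x
  rw [Finset.HasAntidiagonal.mem_antidiagonal] at hx
  simp only at hx
  subst hx
  simp only [tigT]
  have hc : ((k + m).choose k : ℝ) = (k + m).factorial / (k.factorial * m.factorial) :=
    Nat.cast_add_choose ℝ
  rw [hc, show k + m + m = 2 * m + k by ring, show m + k = k + m by ring]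
  field_simp

lemma tig_hasSum_congr {f g : ℕ → ℝ} {u v : ℝ} (h : HasSum f u) (hfg : ∀ m, g m = f m)
    (huv : v = u) : HasSum g v := by
  rw [huv, funext hfg]; exact h

lemma tig_T (a p q : ℝ) (ha : 0 ≤ a) (hp : 0 < p) (hpq : p < q) :
    HasSum (tigT a p q) (p * q / (q - p) * exp (p * a)) := by
  have hq : 0 < q := hp.trans hpq
  have hs : 0 < p + q := by positivity
  have hd : 0 < q - p := by linarith
  have hrow : ∀ k, HasSum (fun m => tigT a p q (k, m))
      (p * q / (q - p) * ((p * a) ^ k / k.factorial)) := by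
    intro k
    have h := (tig_binom (p / (p + q)) (by positivity)
      (by rw [div_lt_div_iff₀ hs two_pos]; linarith) k).mul_left
        (a ^ k / k.factorial * (p * q) ^ (k + 1) / (p + q) ^ (k + 1))
    have e1 : 1 - p / (p + q) = q / (p + q) := by field_simp; ring
    have e2 : 1 - 2 * (p / (p + q)) = (q - p) / (p + q) := by field_simp; ring
    rw [e1, e2] at h
    refine tig_hasSum_congr h (fun m => ?_) ?_
    · simp only [tigT]
      have hc : ((2 * m + k).choose m : ℝ) =
          (2 * m + k).factorial / (m.factorial * (m + k).factorial) := by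
        have := Nat.cast_add_choose ℝ (a := m) (b := m + k)
        rwa [show m + (m + k) = 2 * m + k by ring] at this
      rw [hc, show 2 * m + k + 1 = (k + 1) + (m + m) by ring,
        show k + m + 1 = (k + 1) + m by ring, pow_add _ (k + 1), pow_add _ (k + 1),
        pow_add _ m m, mul_pow (p / (p + q)), div_pow, div_pow, mul_pow p q m]
      field_simp
    · rw [inv_div, inv_div, div_pow, mul_pow, mul_pow, pow_succ, pow_succ, pow_succ]
      field_simp
  have hexp : HasSum (fun k : ℕ => p * q / (q - p) * ((p * a) ^ k / k.factorial))
      (p * q / (q - p) * exp (p * a)) := by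
    rw [Real.exp_eq_exp_ℝ]
    exact (NormedSpace.expSeries_div_hasSum_exp (p * a)).mul_left _
  have hnn : 0 ≤ tigT a p q := by
    intro x; simp only [tigT, Pi.zero_apply]; positivity
  have hsm : Summable (tigT a p q) := by
    rw [summable_prod_of_nonneg hnn]
    refine ⟨fun k => (hrow k).summable, ?_⟩
    simp_rw [fun k => (hrow k).tsum_eq]
    exact hexp.summable
  have := hsm.hasSum.prod_fiberwise hrow
  rw [← this.unique hexp]
  exact hsm.hasSum

lemma tig_sum (a p q : ℝ) (ha : 0 ≤ a) (hp : 0 < p) (hpq : p < q) :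
    HasSum (fun n => ∑ x ∈ Finset.HasAntidiagonal.antidiagonal n, tigT a p q x)
      (p * q / (q - p) * exp (p * a)) := by
  have h := (Finset.HasAntidiagonal.sigmaAntidiagonalEquivProd (A := ℕ)).hasSum_iff.2 (tig_T a p q ha hp hpq)
  have h2 := h.sigma (fun n => hasSum_fintype _)
  refine tig_hasSum_congr h2 (fun n => ?_) rfl
  rw [← Finset.sum_coe_sort]
  rfl

lemma tig_gamma (a l m : ℝ) (ha : 0 ≤ a) (hl : 0 < l) (hm : 0 < m) (n : ℕ) :
    ∫ x : ℝ, gammaDensity (n + 1) l x * gammaDensity (n + 1) m (x + a) =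
      exp (-a / m) * ∑ x ∈ Finset.HasAntidiagonal.antidiagonal n, tigT a l⁻¹ m⁻¹ x := by
  rw [← tig_intn a _ _ (inv_pos.2 hl) (inv_pos.2 hm), ← integral_const_mul,
    ← integral_Ici_eq_integral_Ioi, ← integral_indicator measurableSet_Ici]
  congr 1
  ext x
  by_cases hx : 0 ≤ x
  · rw [Set.indicator_of_mem (by exact hx)]
    have hxa : 0 ≤ x + a := by positivity
    simp only [gammaDensity, if_pos hx, if_pos hxa, Nat.add_sub_cancel]
    have e : exp (-((l⁻¹ + m⁻¹) * x)) * exp (-a / m) = exp (-x / l) * exp (-(x + a) / m) := by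
      rw [← Real.exp_add, ← Real.exp_add]; congr 1; field_simp; ring
    have : ∀ A B : ℝ, exp (-a / m) * (A * (B * exp (-((l⁻¹ + m⁻¹) * x)))) =
      A * B * (exp (-((l⁻¹ + m⁻¹) * x)) * exp (-a / m)) := by intros; ring
    rw [this, e, mul_pow, inv_pow, inv_pow, add_comm a x]
    field_simp
  · rw [Set.indicator_of_notMem (by exact hx)]
    simp [gammaDensity, hx]

lemma tigT_symm (a p q : ℝ) (x : ℕ × ℕ) : tigT a p q x = tigT a q p x := by
  simp only [tigT, mul_comm p q, add_comm p q]

theorem total_interaction_gamma (lam mu : ℝ) (hmu : 0 < mu) (hlm : mu < lam) (x₀ : ℝ) :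
    (∑' n : ℕ, ∫ x : ℝ, gammaDensity (n + 1) lam x * gammaDensity (n + 1) mu (x - x₀))
      = if 0 ≤ x₀ then 1 / (lam - mu)
        else (1 / (lam - mu)) * Real.exp ((lam - mu) / (lam * mu) * x₀) := by
  have hl : 0 < lam := hmu.trans hlm
  have hd : 0 < lam - mu := by linarith
  have hpq : lam⁻¹ < mu⁻¹ := by gcongr
  have hc : lam⁻¹ * mu⁻¹ / (mu⁻¹ - lam⁻¹) = 1 / (lam - mu) := by
    have : mu⁻¹ - lam⁻¹ = (lam - mu) * (lam⁻¹ * mu⁻¹) := by field_simp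
    rw [this]; field_simp
  split_ifs with hx
  · have e : ∀ n : ℕ, (∫ x : ℝ, gammaDensity (n + 1) lam x * gammaDensity (n + 1) mu (x - x₀)) =
        exp (-x₀ / lam) * ∑ x ∈ Finset.HasAntidiagonal.antidiagonal n, tigT x₀ lam⁻¹ mu⁻¹ x := by
      intro n
      rw [← integral_add_right_eq_self _ x₀]
      simp_rw [add_sub_cancel_right, tigT_symm x₀ lam⁻¹ mu⁻¹]
      rw [← tig_gamma x₀ mu lam hx hmu hl n]
      simp_rw [mul_comm]
    simp_rw [e]
    rw [((tig_sum x₀ _ _ hx (inv_pos.2 hl) hpq).mul_left _).tsum_eq, hc, mul_left_comm,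
      ← Real.exp_add]
    have : -x₀ / lam + lam⁻¹ * x₀ = 0 := by field_simp; ring
    rw [this]; simp
  · have ha : 0 ≤ -x₀ := by linarith
    simp_rw [sub_eq_add_neg _ x₀, fun n => tig_gamma (-x₀) lam mu ha hl hmu n]
    rw [((tig_sum (-x₀) _ _ ha (inv_pos.2 hl) hpq).mul_left _).tsum_eq, hc, mul_left_comm,
      ← Real.exp_add]
    congr 2
    field_simp
    ring
end

section
/- Let λ > μ > 0 and let n_0 ∈ ℤ. Then the total interaction between the two families of semi-discrete fundamental solutions with speeds λ and μ (the latter started at position n_0) is given explicitly by: ∫_0^∞ ∑_{n ∈ ℤ} p_{n,λ}(t) · p_{n−n_0,μ}(t) dt = 1/(λ − μ) if n_0 ≥ 0, and = (1/(λ − μ)) · (λ/μ)^{n_0} if n_0 < 0. -/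
open MeasureTheory

/-- Poisson density `p_{n,λ}(t)`: fundamental solution of the semi-discrete linear
equation `d/dt v_n + λ (v_n - v_{n-1}) = 0` with initial data `v_n(0) = δ_{n,0}`. -/
noncomputable def poissonDensity (n : ℤ) (lam : ℝ) (t : ℝ) : ℝ :=
  if 0 ≤ n then (lam * t) ^ n.toNat * Real.exp (-lam * t) / (Nat.factorial n.toNat) else 0

/-- generating series of `C(2m+k, m)` -/
noncomputable def binS (z : ℝ) (k : ℕ) : ℝ := ∑' m : ℕ, ((2 * m + k).choose m : ℝ) * z ^ m

lemma binS_term_le (z : ℝ) (hz : 0 ≤ z) (k m : ℕ) :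
    ((2 * m + k).choose m : ℝ) * z ^ m ≤ 2 ^ k * (4 * z) ^ m := by
  have h : ((2 * m + k).choose m : ℝ) ≤ 2 ^ (2 * m + k) := by
    exact_mod_cast Nat.choose_le_two_pow _ _
  calc _ ≤ 2 ^ (2 * m + k) * z ^ m := by gcongr
    _ = _ := by rw [pow_add, pow_mul, mul_pow]; norm_num; ring

lemma binS_summable (z : ℝ) (hz : 0 ≤ z) (hz4 : 4 * z < 1) (k : ℕ) :
    Summable (fun m : ℕ => ((2 * m + k).choose m : ℝ) * z ^ m) :=
  Summable.of_nonneg_of_le (fun m => by positivity) (binS_term_le z hz k)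
    ((summable_geometric_of_lt_one (by positivity) hz4).mul_left _)

lemma binS_nonneg (z : ℝ) (hz : 0 ≤ z) (k : ℕ) : 0 ≤ binS z k :=
  tsum_nonneg fun m => by positivity

lemma binS_le (z : ℝ) (hz : 0 ≤ z) (hz4 : 4 * z < 1) (k : ℕ) :
    binS z k ≤ 2 ^ k * (1 - 4 * z)⁻¹ := by
  rw [← tsum_geometric_of_lt_one (by positivity) hz4, ← tsum_mul_left]
  exact (binS_summable z hz hz4 k).tsum_le_tsum (binS_term_le z hz k)
    ((summable_geometric_of_lt_one (by positivity) hz4).mul_left _)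

lemma binS_rec (z : ℝ) (hz : 0 ≤ z) (hz4 : 4 * z < 1) (k : ℕ) :
    binS z (k + 1) = binS z k + z * binS z (k + 2) := by
  unfold binS
  rw [(binS_summable z hz hz4 (k+1)).tsum_eq_zero_add, (binS_summable z hz hz4 k).tsum_eq_zero_add,
    ← tsum_mul_left, add_assoc, ← Summable.tsum_add]
  · congr 1
    · simp
    · congr 1
      ext m
      have : (2 * (m + 1) + (k + 1)).choose (m + 1)
          = (2 * m + (k + 2)).choose m + (2 * (m + 1) + k).choose (m + 1) := by
        rw [show 2 * (m + 1) + (k + 1) = (2 * m + (k + 2)) + 1 by ring, Nat.choose_succ_succ,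
          show 2 * (m + 1) + k = 2 * m + (k + 2) by ring]
      rw [this]
      push_cast
      ring
  · exact (summable_nat_add_iff 1).2 (binS_summable z hz hz4 k)
  · exact (binS_summable z hz hz4 (k+2)).mul_left _

lemma binS_zero (z : ℝ) (hz : 0 ≤ z) (hz4 : 4 * z < 1) :
    binS z 0 = 1 + 2 * z * binS z 1 := by
  unfold binS
  rw [(binS_summable z hz hz4 0).tsum_eq_zero_add, ← tsum_mul_left]
  congr 1
  · simp
  · congr 1
    ext m
    have : (2 * (m + 1) + 0).choose (m + 1) = 2 * (2 * m + 1).choose m := by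
      rw [show 2 * (m + 1) + 0 = (2 * m + 1) + 1 by ring, Nat.choose_succ_succ,
        Nat.choose_symm_half]
      ring
    rw [this]
    push_cast
    ring

lemma binS_eq (x y : ℝ) (hy : 0 < y) (hyx : y < x) (hxy : x + y = 1) (k : ℕ) :
    x ^ k * binS (x * y) k = 1 / (x - y) := by
  have hx : 0 < x := hy.trans hyx
  have hz : 0 ≤ x * y := by positivity
  have hz4 : 4 * (x * y) < 1 := by
    have : 0 < (x - y) ^ 2 := by have := sub_pos.2 hyx; positivity
    nlinarith
  set S := binS (x * y) with hS
  have hd : ∀ k, y ^ k * (x * S (k + 1) - S k) = x * S 1 - S 0 := by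
    intro k
    induction k with
    | zero => simp
    | succ k ih =>
      rw [← ih]
      have := binS_rec (x * y) hz hz4 k
      rw [← hS] at this
      have hx1 : x = 1 - y := by linarith
      have e : y * (x * S (k + 2) - S (k + 1)) = x * S (k + 1) - S k := by
        have : x * y * S (k+2) = S (k+1) - S k := by linarith
        calc _ = x * y * S (k+2) - y * S (k+1) := by ring
          _ = _ := by rw [this, hx1]; ring
      rw [pow_succ, mul_assoc, e]
  have hlim : Filter.Tendsto (fun k => y ^ k * S k) Filter.atTop (nhds 0) := by
    have h2 : Filter.Tendsto (fun k : ℕ => (2 * y) ^ k * (1 - 4 * (x * y))⁻¹) Filter.atTop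
        (nhds 0) := by
      simpa using (tendsto_pow_atTop_nhds_zero_of_lt_one (r := 2 * y) (by positivity)
        (by linarith)).mul_const ((1 - 4 * (x * y))⁻¹)
    refine squeeze_zero (fun k => mul_nonneg (by positivity) (binS_nonneg _ hz k)) (fun k => ?_) h2
    calc y ^ k * S k ≤ y ^ k * (2 ^ k * (1 - 4 * (x * y))⁻¹) := by
          gcongr; exact binS_le _ hz hz4 k
      _ = _ := by rw [mul_pow]; ring
  have h0 : x * S 1 - S 0 = 0 := by
    have h3 := ((hlim.comp (Filter.tendsto_add_atTop_nat 1)).const_mul (x / y)).sub hlim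
    rw [mul_zero, sub_zero] at h3
    refine tendsto_nhds_unique (f := fun _ : ℕ => x * S 1 - S 0) tendsto_const_nhds
      (h3.congr fun k => ?_)
    rw [← hd k]
    simp only [Function.comp]
    field_simp
    ring
  have hstep : ∀ k, x * S (k + 1) = S k := by
    intro k
    have := hd k
    rw [h0, mul_eq_zero] at this
    rcases this with h | h
    · exact absurd h (by positivity)
    · linarith
  have hk : x ^ k * S k = S 0 := by
    induction k with
    | zero => simp
    | succ k ih => rw [← ih, ← hstep k]; ring
  rw [hk, eq_div_iff (by linarith)]
  have hb := binS_zero (x * y) hz hz4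
  rw [← hS] at hb
  have h1 := hstep 0
  rw [zero_add] at h1
  have : S 0 = 1 + 2 * y * S 0 := by
    calc S 0 = _ := hb
      _ = 1 + 2 * y * (x * S 1) := by ring
      _ = _ := by rw [h1]
  have hx1 : x = 1 - y := by linarith
  rw [hx1]
  linarith

lemma integral_pow_exp (c : ℝ) (hc : 0 < c) (n : ℕ) :
    ∫ t in Set.Ioi (0 : ℝ), t ^ n * Real.exp (-(c * t)) = n.factorial / c ^ (n + 1) := by
  have h := Real.integral_rpow_mul_exp_neg_mul_Ioi (a := n + 1) (r := c) (by positivity) hc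
  rw [Real.Gamma_nat_eq_factorial] at h
  simp only [add_sub_cancel_right, Real.rpow_natCast] at h
  rw [h, show ((n : ℝ) + 1) = ((n + 1 : ℕ) : ℝ) by push_cast; rfl, Real.rpow_natCast]
  rw [one_div, inv_pow]; ring

lemma integrable_pow_exp (c : ℝ) (hc : 0 < c) (n : ℕ) :
    IntegrableOn (fun t : ℝ => t ^ n * Real.exp (-(c * t))) (Set.Ioi 0) := by
  apply Integrable.of_integral_ne_zero
  rw [integral_pow_exp c hc n]
  positivity

lemma main_integral (a b : ℝ) (ha : 0 < a) (hb : 0 < b) (hab : a ≠ b) (k : ℕ) :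
    ∫ t in Set.Ioi (0 : ℝ), ∑' m : ℕ, poissonDensity ((m + k : ℕ) : ℤ) a t
        * poissonDensity (m : ℤ) b t
      = (a / (a + b)) ^ k / (a + b) * binS (a / (a + b) * (b / (a + b))) k := by
  have hs : 0 < a + b := by positivity
  set F : ℕ → ℝ → ℝ := fun m t => poissonDensity ((m + k : ℕ) : ℤ) a t
        * poissonDensity (m : ℤ) b t with hF
  have hFe : ∀ m, F m = fun t => (a ^ (m + k) * b ^ m / ((m + k).factorial * m.factorial)) *
      (t ^ (2 * m + k) * Real.exp (-((a + b) * t))) := by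
    intro m
    ext t
    simp only [hF, poissonDensity, Int.natCast_nonneg, if_true, Int.toNat_natCast]
    rw [show -((a + b) * t) = -a * t + -b * t by ring, Real.exp_add, mul_pow, mul_pow,
      show 2 * m + k = (m + k) + m by ring, pow_add t (m + k) m]
    field_simp
  have hint : ∀ m, IntegrableOn (F m) (Set.Ioi 0) := by
    intro m
    rw [hFe]
    exact (integrable_pow_exp _ hs _).const_mul _
  have hval : ∀ m, ∫ t in Set.Ioi (0 : ℝ), F m t = (a / (a + b)) ^ k / (a + b) *
      (((2 * m + k).choose m : ℝ) * (a / (a + b) * (b / (a + b))) ^ m) := by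
    intro m
    rw [hFe, integral_const_mul, integral_pow_exp _ hs]
    have := Nat.choose_mul_factorial_mul_factorial (n := 2 * m + k) (k := m) (by omega)
    rw [show 2 * m + k - m = m + k by omega] at this
    rw [← this]
    push_cast
    have h1 : ((m + k).factorial : ℝ) ≠ 0 := by positivity
    have h2 : (m.factorial : ℝ) ≠ 0 := by positivity
    rw [show 2 * m + k + 1 = m + m + k + 1 by ring]
    simp only [pow_add, mul_pow, div_pow, pow_one]
    field_simp
  have hnorm : ∀ m, ∫ t in Set.Ioi (0 : ℝ), ‖F m t‖ = ∫ t in Set.Ioi (0 : ℝ), F m t := by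
    intro m
    refine setIntegral_congr_fun measurableSet_Ioi fun t ht => ?_
    have ht : 0 < t := ht
    rw [Real.norm_of_nonneg]
    rw [hFe]
    positivity
  have hz4 : 4 * (a / (a + b) * (b / (a + b))) < 1 := by
    have h3 : 0 < (a - b) ^ 2 := by have := sub_ne_zero.2 hab; positivity
    rw [div_mul_div_comm, ← mul_div_assoc, div_lt_one (by positivity)]
    nlinarith
  have hsum := (binS_summable _ (by positivity) hz4 k).mul_left ((a / (a + b)) ^ k / (a + b))
  rw [← integral_tsum_of_summable_integral_norm hint]
  · simp_rw [hval]
    rw [tsum_mul_left, binS]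
  · simp_rw [hnorm, hval]
    exact hsum

theorem total_interaction_poisson (lam mu : ℝ) (hmu : 0 < mu) (hlm : mu < lam) (n₀ : ℤ) :
    (∫ t in Set.Ioi (0 : ℝ), ∑' n : ℤ, poissonDensity n lam t * poissonDensity (n - n₀) mu t)
      = if 0 ≤ n₀ then 1 / (lam - mu)
        else (1 / (lam - mu)) * (lam / mu) ^ n₀ := by
  have hl : 0 < lam := hmu.trans hlm
  have hs : 0 < lam + mu := by positivity
  have hd : 0 < lam - mu := by linarith
  have key := binS_eq (lam / (lam + mu)) (mu / (lam + mu)) (by positivity) (by gcongr)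
    (by field_simp)
  have hval : 1 / (lam / (lam + mu) - mu / (lam + mu)) = (lam + mu) / (lam - mu) := by
    rw [← sub_div, one_div_div]
  split_ifs with h
  · obtain ⟨k, rfl⟩ := Int.eq_ofNat_of_zero_le h
    have e : ∀ t, ∑' n : ℤ, poissonDensity n lam t * poissonDensity (n - (k : ℤ)) mu t
        = ∑' m : ℕ, poissonDensity ((m + k : ℕ) : ℤ) lam t * poissonDensity (m : ℤ) mu t := by
      intro t
      rw [← Function.Injective.tsum_eq (g := fun m : ℕ => ((m + k : ℕ) : ℤ))]
      · simp
      · intro i j hij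
        simpa using hij
      · intro n hn
        have : 0 ≤ n - (k : ℤ) := by
          by_contra hc
          exact hn (by simp only [poissonDensity, if_neg hc, mul_zero, zero_mul])
        exact ⟨(n - k).toNat, by simp only; omega⟩
    simp_rw [e]
    rw [main_integral lam mu hl hmu hlm.ne' k, div_mul_eq_mul_div, key k, hval]
    field_simp
  · obtain ⟨k, hk⟩ := Int.eq_ofNat_of_zero_le (show 0 ≤ -n₀ by omega)
    obtain rfl : n₀ = -(k : ℤ) := by omega
    have e : ∀ t, ∑' n : ℤ, poissonDensity n lam t * poissonDensity (n - -(k : ℤ)) mu t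
        = ∑' m : ℕ, poissonDensity ((m + k : ℕ) : ℤ) mu t * poissonDensity (m : ℤ) lam t := by
      intro t
      rw [← Function.Injective.tsum_eq (g := fun m : ℕ => (m : ℤ))]
      · simp [mul_comm]
      · intro i j hij
        simpa using hij
      · intro n hn
        have : 0 ≤ n := by
          by_contra hc
          exact hn (by simp only [poissonDensity, if_neg hc, mul_zero, zero_mul])
        exact ⟨n.toNat, by simp only; omega⟩
    simp_rw [e]
    rw [main_integral mu lam hmu hl hlm.ne k, add_comm mu lam, mul_comm (mu / (lam + mu))]
    have hk2 := key k
    rw [hval] at hk2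
    have h3 : binS (lam / (lam + mu) * (mu / (lam + mu))) k
        = (lam + mu) / (lam - mu) / (lam / (lam + mu)) ^ k := by
      rw [eq_div_iff (by positivity), mul_comm, hk2]
    rw [h3, zpow_neg, zpow_natCast, div_pow, div_pow, div_pow]
    field_simp
end
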